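/- arXiv:1708.09046 — 2 statements merged into one kernel-verified Lean document; each statement's English description precedes it below -/
import Mathlib

section
/- There is an absolute constant C > 0 such that the following holds. Let 0 < λ₁ ≤ λ₂ ≤ 1/2, let J be a finite set of jobs each of whose relative laxity lies in [λ₁, λ₂], and suppose J is feasible on m* machines. If m ≥ C·m*·(1 + log(λ₂/λ₁)/log(1/λ₂)), then every SJF schedule of J on m machines completes every job by its deadline, i.e. |P_j| = p_j for all j ∈ J. In words: SJF is O(log_{1/λ₂}(λ₂/λ₁))-machine optimal on jobs whose relative laxities lie in [λ₁, λ₂] ⊆ (0, 1/2]. -/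
open MeasureTheory Set

/-- A job with release time `r`, size `p > 0` and deadline `d`, satisfying `r + p ≤ d`. -/
structure Job where
  r : ℝ
  p : ℝ
  d : ℝ
  p_pos : 0 < p
  fits : r + p ≤ d

namespace Job

/-- The lifespan `I(j) = [r_j, d_j]` of a job. -/
def lifespan (j : Job) : Set ℝ := Set.Icc j.r j.d

/-- The length `|I(j)| = d_j - r_j` of the lifespan of a job. -/
def len (j : Job) : ℝ := j.d - j.r

/-- The laxity `ℓ_j = d_j - r_j - p_j` of a job. -/
def laxity (j : Job) : ℝ := j.d - j.r - j.p

/-- A job is `α`-tight if `p_j ≥ α·|I(j)|`. -/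
def IsTight (α : ℝ) (j : Job) : Prop := α * j.len ≤ j.p

end Job

/-- `P` is a schedule of the jobs `job j`, `j ∈ J`, on `m` machines:
each job is processed on a measurable subset of its lifespan, and at every time
at most `m` jobs are processed simultaneously. -/
def IsSchedule {ι : Type*} (J : Finset ι) (job : ι → Job) (m : ℕ) (P : ι → Set ℝ) : Prop :=
  (∀ j ∈ J, MeasurableSet (P j)) ∧
  (∀ j ∈ J, P j ⊆ (job j).lifespan) ∧
  (∀ t : ℝ, ∀ S : Finset ι, S ⊆ J → (∀ j ∈ S, t ∈ P j) → S.card ≤ m)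

/-- The jobs `job j`, `j ∈ J`, are feasible on `m` machines: there is a schedule on `m`
machines processing every job for exactly `p_j` time units. -/
def FeasibleOn {ι : Type*} (J : Finset ι) (job : ι → Job) (m : ℕ) : Prop :=
  ∃ P : ι → Set ℝ, IsSchedule J job m P ∧
    ∀ j ∈ J, volume (P j) = ENNReal.ofReal (job j).p

/-- `T ⊆ ℝ` is a finite union of (closed) time intervals. -/
def FiniteUnionOfIntervals (T : Set ℝ) : Prop :=
  ∃ s : Finset (ℝ × ℝ), T = ⋃ q ∈ s, Set.Icc q.1 q.2

/-- Job `j` is alive at time `t` under schedule `P`: `t ∈ [r_j, d_j)` and the work done on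
`j` before `t` is less than `p_j`. -/
def Alive {ι : Type*} (job : ι → Job) (P : ι → Set ℝ) (j : ι) (t : ℝ) : Prop :=
  t ∈ Set.Ico (job j).r (job j).d ∧
    volume (P j ∩ Set.Ico (job j).r t) < ENNReal.ofReal (job j).p

/-- `P` is an SJF (Shortest Job First) schedule of the jobs `J` on `m` machines: it is a
schedule, jobs are processed only while alive, and for almost every time `t`, if some job is
alive but not processed at `t`, then `m` alive jobs of size at most its size are processed
at `t`. -/
def IsSJFSchedule {ι : Type*} (J : Finset ι) (job : ι → Job) (m : ℕ) (P : ι → Set ℝ) : Prop :=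
  IsSchedule J job m P ∧
  (∀ j ∈ J, ∀ t ∈ P j, Alive job P j t) ∧
  (∀ᵐ t : ℝ ∂volume, ∀ j ∈ J, Alive job P j t → t ∉ P j →
    ∃ S : Finset ι, S ⊆ J ∧ S.card = m ∧
      ∀ i ∈ S, t ∈ P i ∧ Alive job P i t ∧ (job i).p ≤ (job j).p)

/-!
Call a point crowded at level `n` if some `n` jobs have it within half a lifespan to the right of a
common time, which itself lies in the first half of each of these lifespans. Passing from level `n`
to level `n + a` shrinks the crowded set by a factor `O(δ)`: feasibility keeps `a` lifespans that
are `δ`-dense in the crowded set from overlapping on more than half of it, and elsewhere the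
shortest of the `n` or more remaining jobs spends half its lifespan at level `n` but less than a
fraction `δ` at level `n + a`. Laxity at most a fraction `λ₂` of the lifespan allows `δ` to be of
order `√λ₂` with `a = O(m*)`, so a constant number of such steps gains a factor `λ₂`. Applying this
also to the time-reversed jobs bounds the times at which many jobs are alive.

Under SJF, an unfinished job `j` waits for longer than `ℓ_j ≥ λ₁ |I(j)|`, and almost all of this
time lies in the lifespans of `m` jobs no larger than `j`, which have length at most `2 |I(j)|`.
When `m` is a large multiple of `m* (1 + log (λ₂ / λ₁) / log (1 / λ₂))`, the factor `λ₂` is gained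
often enough to bring the measure of these times down to `λ₁ |I(j)|`, a contradiction.
-/

open scoped Finset ENNReal

section Covering

variable {α ι : Type*} [LinearOrder α] {s : Finset ι} (l u : ι → α)

open scoped Classical in
theorem exists_mem_erase_Icc_of_two_lt_card {x : α} (hx : 2 < #{i ∈ s | x ∈ Icc (l i) (u i)}) :
    ∃ k ∈ s, ∀ y ∈ Icc (l k) (u k), ∃ i ∈ s.erase k, y ∈ Icc (l i) (u i) := by
  set F := {i ∈ s | x ∈ Icc (l i) (u i)}
  have hF : F.Nonempty := Finset.card_pos.1 (by omega)
  obtain ⟨p, hp, hpl⟩ := F.exists_min_image l hF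
  obtain ⟨q, hq, hqu⟩ := F.exists_max_image u hF
  obtain ⟨k, hkF, hk⟩ := Finset.exists_mem_notMem_of_card_lt_card
    ((Finset.card_le_two (a := p) (b := q)).trans_lt hx)
  have hkp := hpl k hkF
  have hkq := hqu k hkF
  simp only [Finset.mem_insert, Finset.mem_singleton, not_or] at hk
  simp only [F, Finset.mem_filter] at hp hq hkF
  refine ⟨k, hkF.1, fun y hy => ?_⟩
  rcases le_total y x with hyx | hxy
  · exact ⟨p, Finset.mem_erase.2 ⟨Ne.symm hk.1, hp.1⟩, hkp.trans hy.1, hyx.trans hp.2.2⟩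
  · exact ⟨q, Finset.mem_erase.2 ⟨Ne.symm hk.2, hq.1⟩, hq.2.1.trans hxy, hy.2.trans hkq⟩

open scoped Classical in
theorem exists_subcover_Icc_card_le_two (s : Finset ι) :
    ∃ t ⊆ s, (⋃ i ∈ t, Icc (l i) (u i)) = (⋃ i ∈ s, Icc (l i) (u i)) ∧
      ∀ x, #{i ∈ t | x ∈ Icc (l i) (u i)} ≤ 2 := by
  induction s using Finset.strongInduction with
  | H s ih =>
    by_cases! h : ∀ x, #{i ∈ s | x ∈ Icc (l i) (u i)} ≤ 2
    · exact ⟨s, Subset.rfl, rfl, h⟩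
    obtain ⟨x, hx⟩ := h
    obtain ⟨k, hk, hcov⟩ := exists_mem_erase_Icc_of_two_lt_card l u hx
    obtain ⟨t, hts, hunion, hcard⟩ := ih (s.erase k) (Finset.erase_ssubset hk)
    refine ⟨t, hts.trans (s.erase_subset k), hunion.trans (Subset.antisymm ?_ ?_), hcard⟩
    · exact biUnion_subset_biUnion_left fun i hi => Finset.mem_of_mem_erase hi
    · refine iUnion₂_subset fun i hi y hy => mem_iUnion₂.2 ?_
      obtain rfl | hik := eq_or_ne i k
      · obtain ⟨j, hj, hyj⟩ := hcov y hy
        exact ⟨j, hj, hyj⟩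
      · exact ⟨i, Finset.mem_erase.2 ⟨hik, hi⟩, hy⟩

end Covering

section Multiplicity

variable {α ι : Type*} [MeasurableSpace α] {μ : Measure α} {s : Finset ι} {X : ι → Set α}
  {W : Set α}

open scoped Classical in
theorem measurable_card_filter_mem (hX : ∀ i ∈ s, MeasurableSet (X i)) :
    Measurable fun x => (#{i ∈ s | x ∈ X i} : ℝ≥0∞) := by
  simp only [Finset.card_filter, Nat.cast_sum, Nat.cast_ite, Nat.cast_one, Nat.cast_zero]
  exact Finset.measurable_sum _ fun i hi => .ite (hX i hi) measurable_const measurable_const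

open scoped Classical in
theorem sum_measure_inter_eq_setLIntegral_card (hX : ∀ i ∈ s, MeasurableSet (X i)) :
    ∑ i ∈ s, μ (X i ∩ W) = ∫⁻ x in W, #{i ∈ s | x ∈ X i} ∂μ := by
  calc ∑ i ∈ s, μ (X i ∩ W) = ∑ i ∈ s, ∫⁻ x in W, (X i).indicator 1 x ∂μ :=
        Finset.sum_congr rfl fun i hi => by
          rw [lintegral_indicator_one (hX i hi), Measure.restrict_apply (hX i hi)]
    _ = ∫⁻ x in W, ∑ i ∈ s, (X i).indicator 1 x ∂μ :=
        (lintegral_finsetSum _ fun i hi => measurable_one.indicator (hX i hi)).symm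
    _ = ∫⁻ x in W, #{i ∈ s | x ∈ X i} ∂μ := by
        simp [indicator_apply]

open scoped Classical in
theorem sum_measure_inter_le_of_card_le (hX : ∀ i ∈ s, MeasurableSet (X i)) {b : ℕ}
    (h : ∀ x ∈ W, #{i ∈ s | x ∈ X i} ≤ b) : ∑ i ∈ s, μ (X i ∩ W) ≤ b * μ W := by
  rw [sum_measure_inter_eq_setLIntegral_card hX, ← setLIntegral_const]
  exact setLIntegral_mono measurable_const fun x hx => by exact_mod_cast h x hx

open scoped Classical in
theorem le_sum_measure_inter_of_le_card (hX : ∀ i ∈ s, MeasurableSet (X i)) {a : ℕ}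
    (h : ∀ x ∈ W, a ≤ #{i ∈ s | x ∈ X i}) : a * μ W ≤ ∑ i ∈ s, μ (X i ∩ W) := by
  rw [sum_measure_inter_eq_setLIntegral_card hX, ← setLIntegral_const]
  exact setLIntegral_mono (measurable_card_filter_mem hX) fun x hx => by exact_mod_cast h x hx

variable [LinearOrder α] [TopologicalSpace α] [OrderClosedTopology α] [OpensMeasurableSpace α]
  (l u : ι → α)

theorem measure_biUnion_Icc_inter_le {V U : Set α} {c : ℝ≥0∞}
    (h : ∀ i ∈ s, μ (Icc (l i) (u i) ∩ V) ≤ c * μ (Icc (l i) (u i) ∩ U)) :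
    μ ((⋃ i ∈ s, Icc (l i) (u i)) ∩ V) ≤ 2 * c * μ U := by
  classical
  obtain ⟨t, hts, hunion, hcard⟩ := exists_subcover_Icc_card_le_two l u s
  calc μ ((⋃ i ∈ s, Icc (l i) (u i)) ∩ V) = μ (⋃ i ∈ t, Icc (l i) (u i) ∩ V) := by
        rw [← hunion, iUnion₂_inter]
    _ ≤ ∑ i ∈ t, μ (Icc (l i) (u i) ∩ V) := measure_biUnion_finset_le t _
    _ ≤ ∑ i ∈ t, c * μ (Icc (l i) (u i) ∩ U) := Finset.sum_le_sum fun i hi => h i (hts hi)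
    _ = c * ∑ i ∈ t, μ (Icc (l i) (u i) ∩ U) := (Finset.mul_sum ..).symm
    _ ≤ c * ((2 : ℕ) * μ U) := by
        gcongr
        exact sum_measure_inter_le_of_card_le (fun _ _ => measurableSet_Icc) fun x _ => by
          convert hcard x
    _ = 2 * c * μ U := by push_cast; ring

end Multiplicity

theorem measure_le_of_forall_inter_Iio_le {μ : Measure ℝ} [NullSingletonClass μ] {s : Set ℝ}
    (hs : BddAbove s) {c : ℝ≥0∞} (h : ∀ t ∈ s, μ (s ∩ Iio t) ≤ c) : μ s ≤ c := by
  rcases s.eq_empty_or_nonempty with rfl | hne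
  · simp
  have hlub : IsLUB s (sSup s) := isLUB_csSup hne hs
  obtain ⟨v, hmono, -, hlim, hv⟩ := hlub.exists_seq_monotone_tendsto hne
  have hcover : s ⊆ (⋃ n, s ∩ Iio (v n)) ∪ {sSup s} := by
    intro t ht
    rcases (hlub.1 ht).lt_or_eq with hlt | heq
    · obtain ⟨n, hn⟩ := (hlim.eventually (lt_mem_nhds hlt)).exists
      exact .inl (mem_iUnion.2 ⟨n, ht, hn⟩)
    · exact .inr heq
  calc μ s ≤ μ (⋃ n, s ∩ Iio (v n)) + μ {sSup s} :=
        (measure_mono hcover).trans (measure_union_le _ _)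
    _ = ⨆ n, μ (s ∩ Iio (v n)) := by
        rw [measure_singleton, add_zero, Monotone.measure_iUnion]
        exact fun a b hab => inter_subset_inter_right _ (Iio_subset_Iio (hmono hab))
    _ ≤ c := iSup_le fun n => h _ (hv n)

namespace Job

variable (j : Job)

theorem len_pos : 0 < j.len := by
  rw [len]; linarith [j.p_pos, j.fits]

theorem p_add_laxity : j.p + j.laxity = j.len := by
  rw [laxity, len]; ring

theorem volume_lifespan : volume j.lifespan = ENNReal.ofReal j.len := Real.volume_Icc

variable {j} in
theorem volume_lifespan_sdiff {Q : Set ℝ} (hQ : MeasurableSet Q) (hsub : Q ⊆ j.lifespan)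
    (hvol : volume Q = ENNReal.ofReal j.p) :
    volume (j.lifespan \ Q) = ENNReal.ofReal j.laxity := by
  rw [measure_sdiff hsub hQ.nullMeasurableSet (by simp [hvol]), volume_lifespan, hvol,
    ← ENNReal.ofReal_sub _ j.p_pos.le, ← p_add_laxity, add_sub_cancel_left]

variable {j} in
theorem ofReal_laxity_lt_volume_lifespan_sdiff {Q : Set ℝ}
    (hvol : volume Q < ENNReal.ofReal j.p) :
    ENNReal.ofReal j.laxity < volume (j.lifespan \ Q) := by
  have hlax : 0 ≤ j.laxity := by rw [laxity]; linarith [j.fits]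
  refine lt_of_not_ge fun hle => (ENNReal.add_lt_add_of_lt_of_le ?_ hvol hle).not_ge ?_
  · exact measure_ne_top_of_subset sdiff_subset (by simp [volume_lifespan])
  · calc ENNReal.ofReal j.p + ENNReal.ofReal j.laxity = volume j.lifespan := by
          rw [volume_lifespan, ← ENNReal.ofReal_add j.p_pos.le hlax, p_add_laxity]
      _ ≤ volume (Q ∪ j.lifespan \ Q) := measure_mono (by simp)
      _ ≤ volume Q + volume (j.lifespan \ Q) := measure_union_le _ _

/-- Time reversal of a job. -/
def reverse : Job where
  r := -j.d
  p := j.p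
  d := -j.r
  p_pos := j.p_pos
  fits := by linarith [j.fits]

theorem len_reverse : j.reverse.len = j.len := by
  simp only [len, reverse]; ring

theorem laxity_reverse : j.reverse.laxity = j.laxity := by
  simp only [laxity, reverse]; ring

theorem lifespan_reverse : j.reverse.lifespan = -j.lifespan :=
  (neg_Icc j.r j.d).symm

/-- `j.Reaches t x`: the time `t` lies in the first half of the lifespan of `j`, and `x` lies in
the interval of length `|I(j)| / 2` starting at `t`, which is then contained in the lifespan. -/
def Reaches (t x : ℝ) : Prop :=
  t ∈ Icc j.r (j.r + j.len / 2) ∧ x ∈ Icc t (t + j.len / 2)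

variable {j} {t x : ℝ}

theorem Reaches.mem_lifespan (h : j.Reaches t x) : x ∈ j.lifespan := by
  obtain ⟨⟨hrt, htm⟩, htx, hxt⟩ := h
  have hlen : j.len = j.d - j.r := rfl
  exact ⟨by linarith, by linarith⟩

theorem Reaches.of_len_le {k : Job} {y : ℝ} (h : k.Reaches t x) (hjk : j.len ≤ k.len)
    (hy : y ∈ Icc t (t + j.len / 2)) : k.Reaches t y :=
  ⟨h.1, hy.1, by linarith [hy.2]⟩

theorem reaches_self_or_reverse_of_mem_lifespan (h : t ∈ j.lifespan) :
    j.Reaches t t ∨ j.reverse.Reaches (-t) (-t) := by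
  have hlen : j.len = j.d - j.r := rfl
  have hr : j.reverse.r = -j.d := rfl
  have hpos := j.len_pos
  simp only [Reaches, len_reverse, mem_Icc, hr]
  rcases le_total t (j.r + j.len / 2) with hle | hle
  · exact .inl ⟨⟨h.1, hle⟩, le_rfl, by linarith⟩
  · exact .inr ⟨⟨by linarith [h.2], by linarith⟩, le_rfl, by linarith⟩

end Job

namespace FeasibleOn

variable {ι : Type*} {J : Finset ι} {job : ι → Job} {m : ℕ}

theorem mono {G : Finset ι} (h : FeasibleOn J job m) (hG : G ⊆ J) : FeasibleOn G job m := by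
  obtain ⟨Q, ⟨hmeas, hsub, hcard⟩, hvol⟩ := h
  exact ⟨Q, ⟨fun i hi => hmeas i (hG hi), fun i hi => hsub i (hG hi),
    fun t S hS => hcard t S (hS.trans hG)⟩, fun i hi => hvol i (hG hi)⟩

theorem machines_pos (h : FeasibleOn J job m) {j : ι} (hj : j ∈ J) : 0 < m := by
  obtain ⟨Q, ⟨-, -, hcard⟩, hvol⟩ := h
  have hQ : volume (Q j) ≠ 0 := by simpa [hvol j hj] using (job j).p_pos
  obtain ⟨t, ht⟩ := nonempty_of_measure_ne_zero hQ
  calc 0 < #{j} := by simp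
    _ ≤ m := hcard t {j} (by simpa using hj) (by simpa using ht)

theorem reverse (h : FeasibleOn J job m) : FeasibleOn J (fun i => (job i).reverse) m := by
  obtain ⟨Q, ⟨hmeas, hsub, hcard⟩, hvol⟩ := h
  refine ⟨fun i => -Q i, ⟨fun i hi => (hmeas i hi).neg, fun i hi => ?_,
    fun t S hS ht => hcard (-t) S hS ht⟩, fun i hi => ?_⟩
  · rw [Job.lifespan_reverse]
    exact neg_subset_neg.2 (hsub i hi)
  · exact (Measure.measure_neg ..).trans (hvol i hi)

/-- At least half of each overlap is spent processing, and `m` machines process for at most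
`m * volume V` in total during `V`. -/
theorem sum_volume_inter_le (h : FeasibleOn J job m) {V : Set ℝ}
    (hlax : ∀ i ∈ J, 2 * ENNReal.ofReal (job i).laxity ≤ volume ((job i).lifespan ∩ V)) :
    ∑ i ∈ J, volume ((job i).lifespan ∩ V) ≤ 2 * m * volume V := by
  classical
  obtain ⟨Q, ⟨hmeas, hsub, hcard⟩, hvol⟩ := h
  have hload : ∑ i ∈ J, volume (Q i ∩ V) ≤ m * volume V :=
    sum_measure_inter_le_of_card_le hmeas fun x _ =>
      hcard x _ (Finset.filter_subset _ _) fun i hi => (Finset.mem_filter.1 hi).2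
  have hsplit : ∀ i ∈ J, 2 * volume ((job i).lifespan ∩ V)
      ≤ 2 * volume (Q i ∩ V) + volume ((job i).lifespan ∩ V) := by
    intro i hi
    have hcover : (job i).lifespan ∩ V ⊆ (Q i ∩ V) ∪ ((job i).lifespan \ Q i) := fun x hx =>
      (em (x ∈ Q i)).imp (fun hxQ => ⟨hxQ, hx.2⟩) fun hxQ => ⟨hx.1, hxQ⟩
    calc 2 * volume ((job i).lifespan ∩ V)
        ≤ 2 * (volume (Q i ∩ V) + volume ((job i).lifespan \ Q i)) := by
          gcongr
          exact (measure_mono hcover).trans (measure_union_le _ _)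
      _ = 2 * volume (Q i ∩ V) + 2 * ENNReal.ofReal (job i).laxity := by
          rw [Job.volume_lifespan_sdiff (hmeas i hi) (hsub i hi) (hvol i hi), mul_add]
      _ ≤ _ := by gcongr; exact hlax i hi
  have hfinite : ∑ i ∈ J, volume ((job i).lifespan ∩ V) ≠ ∞ :=
    ENNReal.sum_ne_top.2 fun i _ =>
      measure_ne_top_of_subset inter_subset_left (by simp [Job.volume_lifespan])
  have hsum := Finset.sum_le_sum hsplit
  rw [Finset.sum_add_distrib, ← Finset.mul_sum, ← Finset.mul_sum, two_mul] at hsum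
  calc ∑ i ∈ J, volume ((job i).lifespan ∩ V) ≤ 2 * ∑ i ∈ J, volume (Q i ∩ V) :=
        ENNReal.le_of_add_le_add_right hfinite hsum
    _ ≤ 2 * (m * volume V) := by gcongr
    _ = 2 * m * volume V := (mul_assoc ..).symm

end FeasibleOn

section Crowded

variable {ι : Type*} (J : Finset ι) (job : ι → Job)

open scoped Classical in
/-- The jobs of `J` which spend at least a fraction `δ` of their lifespan in `V`. -/
noncomputable def denseJobs (δ : ℝ≥0∞) (V : Set ℝ) : Finset ι :=
  {i ∈ J | δ * volume (job i).lifespan ≤ volume ((job i).lifespan ∩ V)}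

/-- The lifespans of the `δ`-dense jobs of any set `V` overlap `V` with average multiplicity at
most `a / 2`. -/
def DenseLoadBound (δ : ℝ≥0∞) (a : ℕ) : Prop :=
  ∀ V, 2 * ∑ i ∈ denseJobs J job δ V, volume ((job i).lifespan ∩ V) ≤ a * volume V

open scoped Classical in
/-- The times `x` reached, from a common starting time, by at least `n` jobs of `J`. -/
def crowded (n : ℕ) : Set ℝ :=
  {x | ∃ t, n ≤ #{i ∈ J | (job i).Reaches t x}}

open scoped Classical in
/-- The times lying in the lifespans of at least `n` jobs of `J`. -/
def overloaded (n : ℕ) : Set ℝ :=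
  {t | n ≤ #{i ∈ J | t ∈ (job i).lifespan}}

variable {J job} {δ : ℝ≥0∞} {a n : ℕ}

theorem DenseLoadBound.of_laxity_le {m : ℕ} (hfeas : FeasibleOn J job m)
    (hlax : ∀ i ∈ J, 2 * ENNReal.ofReal (job i).laxity ≤ δ * volume (job i).lifespan) :
    DenseLoadBound J job δ (4 * m) := by
  intro V
  have hsub : denseJobs J job δ V ⊆ J := Finset.filter_subset _ _
  calc 2 * ∑ i ∈ denseJobs J job δ V, volume ((job i).lifespan ∩ V)
      ≤ 2 * (2 * m * volume V) := by
        gcongr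
        exact (hfeas.mono hsub).sum_volume_inter_le fun i hi =>
          (hlax i (hsub hi)).trans (Finset.mem_filter.1 hi).2
    _ = (4 * m : ℕ) * volume V := by push_cast; ring

theorem DenseLoadBound.of_two_mul_laxity_le {m : ℕ} (hfeas : FeasibleOn J job m)
    (hlax : ∀ i ∈ J, 2 * ENNReal.ofReal (job i).laxity ≤ volume (job i).lifespan)
    (hδ₀ : δ ≠ 0) (hδ : δ ≠ ∞) (ha : 8 * m * δ⁻¹ ≤ a) : DenseLoadBound J job δ a := by
  intro V
  set G := denseJobs J job δ V
  set W := ⋃ i ∈ G, (job i).lifespan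
  have hsub : G ⊆ J := Finset.filter_subset _ _
  have hW : ∀ i ∈ G, (job i).lifespan ∩ W = (job i).lifespan := fun i hi =>
    inter_eq_left.2 (subset_biUnion_of_mem (u := fun i => (job i).lifespan) hi)
  have hvol : volume W ≤ 2 * δ⁻¹ * volume V := by
    rw [← inter_self W]
    refine measure_biUnion_Icc_inter_le (fun i => (job i).r) (fun i => (job i).d) fun i hi => ?_
    exact (measure_mono inter_subset_left).trans
      ((ENNReal.mul_le_iff_le_inv hδ₀ hδ).1 (Finset.mem_filter.1 hi).2)
  calc 2 * ∑ i ∈ G, volume ((job i).lifespan ∩ V)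
      ≤ 2 * ∑ i ∈ G, volume ((job i).lifespan ∩ W) := by
        gcongr 2 * ?_
        exact Finset.sum_le_sum fun i hi => measure_mono (inter_subset_left.trans (hW i hi).ge)
    _ ≤ 2 * (2 * m * volume W) := by
        gcongr
        exact (hfeas.mono hsub).sum_volume_inter_le fun i hi =>
          (hlax i (hsub hi)).trans_eq (by rw [hW i hi])
    _ ≤ 2 * (2 * m * (2 * δ⁻¹ * volume V)) := by gcongr
    _ = 8 * m * δ⁻¹ * volume V := by ring
    _ ≤ a * volume V := by gcongr

theorem DenseLoadBound.sqrt_of_laxity_le {m : ℕ} {lam : ℝ} (hlam : 0 ≤ lam)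
    (hsqrt : √lam ≤ 1 / 2) (hfeas : FeasibleOn J job m)
    (hlax : ∀ i ∈ J, (job i).laxity ≤ lam * (job i).len) :
    DenseLoadBound J job (ENNReal.ofReal √lam) (4 * m) := by
  refine .of_laxity_le hfeas fun i hi => ?_
  rw [Job.volume_lifespan, ← ENNReal.ofReal_ofNat, ← ENNReal.ofReal_mul zero_le_two,
    ← ENNReal.ofReal_mul (Real.sqrt_nonneg lam)]
  refine ENNReal.ofReal_le_ofReal ?_
  calc 2 * (job i).laxity ≤ 2 * (√lam * √lam * (job i).len) := by
        rw [Real.mul_self_sqrt hlam]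
        linarith [hlax i hi]
    _ = 2 * √lam * (√lam * (job i).len) := by ring
    _ ≤ √lam * (job i).len :=
        mul_le_of_le_one_left (mul_nonneg (Real.sqrt_nonneg lam) (job i).len_pos.le) (by linarith)

theorem exists_denseLoadBound {m : ℕ} {lam : ℝ} (hlam : 0 < lam) (hlam2 : lam ≤ 1 / 2)
    (hfeas : FeasibleOn J job m) (hlax : ∀ i ∈ J, (job i).laxity ≤ lam * (job i).len) :
    ∃ δ : ℝ, 0 ≤ δ ∧ (8 * δ) ^ 4 ≤ lam ∧ DenseLoadBound J job (ENNReal.ofReal δ) (512 * m) := by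
  rcases le_total lam (1 / 4096) with hsmall | hlarge
  · have hsqrt : √lam ≤ 1 / 64 := Real.sqrt_le_iff.2 ⟨by norm_num, by linarith⟩
    refine ⟨√lam, Real.sqrt_nonneg lam, ?_, fun V => ?_⟩
    · calc (8 * √lam) ^ 4 = 4096 * (√lam ^ 2) * (√lam ^ 2) := by ring
        _ = 4096 * lam * lam := by rw [Real.sq_sqrt hlam.le]
        _ ≤ lam := by nlinarith
    · refine (DenseLoadBound.sqrt_of_laxity_le hlam.le (by linarith) hfeas hlax V).trans ?_
      gcongr
      norm_num
  · refine ⟨1 / 64, by norm_num, by linarith, ?_⟩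
    refine .of_two_mul_laxity_le hfeas (fun i hi => ?_) (by simp) (by simp) ?_
    · rw [Job.volume_lifespan, ← ENNReal.ofReal_ofNat, ← ENNReal.ofReal_mul zero_le_two]
      refine ENNReal.ofReal_le_ofReal ?_
      nlinarith [hlax i hi, (job i).len_pos]
    · have hinv : (ENNReal.ofReal (1 / 64))⁻¹ = 64 := by
        rw [← ENNReal.ofReal_inv_of_pos (by norm_num)]
        norm_num
      rw [hinv]
      push_cast
      exact le_of_eq (by ring)

theorem crowded_subset_biUnion_lifespan (hn : 0 < n) :
    crowded J job n ⊆ ⋃ i ∈ J, (job i).lifespan := by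
  classical
  rintro x ⟨t, ht⟩
  obtain ⟨i, hi⟩ := Finset.card_pos.1 (hn.trans_le ht)
  obtain ⟨hiJ, hreach⟩ := Finset.mem_filter.1 hi
  exact mem_biUnion hiJ hreach.mem_lifespan

theorem volume_crowded_ne_top (hn : 0 < n) : volume (crowded J job n) ≠ ∞ := by
  refine measure_ne_top_of_subset (crowded_subset_biUnion_lifespan hn) ?_
  exact (measure_biUnion_lt_top J.finite_toSet fun i _ => by simp [Job.volume_lifespan]).ne

open scoped Classical in
/-- The witness is the shortest job outside `D` reaching `x` from the starting time `t`: all longer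
jobs outside `D` that reach `x` from `t` contain the half-lifespan of the witness starting at `t`,
and fewer than `a` jobs are lost. -/
theorem exists_volume_lifespan_le_two_mul {x : ℝ} (hx : x ∈ crowded J job (n + a)) {D : Finset ι}
    (hD : #{i ∈ D | x ∈ (job i).lifespan} < a) :
    ∃ i ∈ J, i ∉ D ∧ x ∈ (job i).lifespan ∧
      volume (job i).lifespan ≤ 2 * volume ((job i).lifespan ∩ crowded J job n) := by
  classical
  obtain ⟨t, ht⟩ := hx
  set R := {i ∈ J | (job i).Reaches t x}
  have hRD : #(R ∩ D) < a := by
    refine (Finset.card_le_card fun i hi => ?_).trans_lt hD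
    obtain ⟨hiR, hiD⟩ := Finset.mem_inter.1 hi
    exact Finset.mem_filter.2 ⟨hiD, (Finset.mem_filter.1 hiR).2.mem_lifespan⟩
  have hcard : n < #(R \ D) := by
    have := Finset.card_sdiff_add_card_inter R D
    omega
  obtain ⟨i, hi, hmin⟩ := (R \ D).exists_min_image (fun i => (job i).len)
    (Finset.card_pos.1 (n.zero_le.trans_lt hcard))
  obtain ⟨hiR, hiD⟩ := Finset.mem_sdiff.1 hi
  obtain ⟨hiJ, hreach⟩ := Finset.mem_filter.1 hiR
  have hhalf : Icc t (t + (job i).len / 2) ⊆ (job i).lifespan ∩ crowded J job n := by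
    refine fun y hy => ⟨(hreach.of_len_le le_rfl hy).mem_lifespan, t, hcard.le.trans ?_⟩
    refine Finset.card_le_card fun k hk => ?_
    obtain ⟨hkJ, hkreach⟩ := Finset.mem_filter.1 (Finset.mem_sdiff.1 hk).1
    exact Finset.mem_filter.2 ⟨hkJ, hkreach.of_len_le (hmin k hk) hy⟩
  refine ⟨i, hiJ, hiD, hreach.mem_lifespan, ?_⟩
  calc volume (job i).lifespan = 2 * volume (Icc t (t + (job i).len / 2)) := by
        rw [Real.volume_Icc, Job.volume_lifespan, ← ENNReal.ofReal_ofNat,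
          ← ENNReal.ofReal_mul (by norm_num)]
        ring_nf
    _ ≤ _ := by gcongr

open scoped Classical in
theorem DenseLoadBound.two_mul_volume_le (h : DenseLoadBound J job δ a) (ha : 0 < a) (V : Set ℝ) :
    2 * volume {x ∈ V | a ≤ #{i ∈ denseJobs J job δ V | x ∈ (job i).lifespan}} ≤ volume V := by
  set B := {x ∈ V | a ≤ #{i ∈ denseJobs J job δ V | x ∈ (job i).lifespan}}
  rw [← ENNReal.mul_le_mul_iff_right (Nat.cast_ne_zero.2 ha.ne') (ENNReal.natCast_ne_top a)]
  calc a * (2 * volume B) = 2 * (a * volume B) := by ring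
    _ ≤ 2 * ∑ i ∈ denseJobs J job δ V, volume ((job i).lifespan ∩ B) := by
        gcongr
        exact le_sum_measure_inter_of_le_card (fun i _ => measurableSet_Icc) fun x hx => hx.2
    _ ≤ 2 * ∑ i ∈ denseJobs J job δ V, volume ((job i).lifespan ∩ V) := by
        gcongr
        exact sep_subset _ _
    _ ≤ a * volume V := h V

theorem DenseLoadBound.volume_crowded_add_le (h : DenseLoadBound J job δ a) (ha : 0 < a) :
    volume (crowded J job (n + a)) ≤ 8 * δ * volume (crowded J job n) := by
  classical
  set V := crowded J job (n + a)
  set U := crowded J job n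
  set D := denseJobs J job δ V
  set B := {x ∈ V | a ≤ #{i ∈ D | x ∈ (job i).lifespan}}
  set Q := {i ∈ J \ D | volume (job i).lifespan ≤ 2 * volume ((job i).lifespan ∩ U)}
  have hcover : V ⊆ B ∪ ((⋃ i ∈ Q, (job i).lifespan) ∩ V) := by
    intro x hx
    rcases le_or_gt a #{i ∈ D | x ∈ (job i).lifespan} with hxD | hxD
    · exact .inl ⟨hx, hxD⟩
    · obtain ⟨i, hiJ, hiD, hxi, hhalf⟩ := exists_volume_lifespan_le_two_mul hx hxD
      exact .inr ⟨mem_biUnion (x := i) (Finset.mem_filter.2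
        ⟨Finset.mem_sdiff.2 ⟨hiJ, hiD⟩, hhalf⟩) hxi, hx⟩
  have hsparse : volume ((⋃ i ∈ Q, (job i).lifespan) ∩ V) ≤ 2 * (δ * 2) * volume U := by
    refine measure_biUnion_Icc_inter_le (fun i => (job i).r) (fun i => (job i).d) fun i hi => ?_
    obtain ⟨hiJD, hhalf⟩ := Finset.mem_filter.1 hi
    obtain ⟨hiJ, hiD⟩ := Finset.mem_sdiff.1 hiJD
    have hlt : volume ((job i).lifespan ∩ V) < δ * volume (job i).lifespan :=
      not_le.1 fun hle => hiD (Finset.mem_filter.2 ⟨hiJ, hle⟩)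
    rw [mul_assoc]
    exact hlt.le.trans (by gcongr; exact hhalf)
  have htwo : volume V + volume V ≤ 8 * δ * volume U + volume V := by
    calc volume V + volume V = 2 * volume V := (two_mul _).symm
      _ ≤ 2 * (volume B + 2 * (δ * 2) * volume U) := by
          gcongr
          exact (measure_mono hcover).trans ((measure_union_le _ _).trans (by gcongr))
      _ = 8 * δ * volume U + 2 * volume B := by ring
      _ ≤ 8 * δ * volume U + volume V := by
          gcongr
          exact h.two_mul_volume_le ha V
  exact ENNReal.le_of_add_le_add_right (volume_crowded_ne_top (by omega)) htwo

theorem DenseLoadBound.volume_crowded_succ_mul_le (h : DenseLoadBound J job δ a) (ha : 0 < a)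
    (k : ℕ) : volume (crowded J job ((k + 1) * a)) ≤
      (8 * δ) ^ k * volume (⋃ i ∈ J, (job i).lifespan) := by
  induction k with
  | zero => simpa using measure_mono (crowded_subset_biUnion_lifespan ha)
  | succ k ih =>
    calc volume (crowded J job ((k + 1 + 1) * a))
        ≤ 8 * δ * volume (crowded J job ((k + 1) * a)) := by
          rw [add_one_mul (k + 1) a]
          exact h.volume_crowded_add_le ha
      _ ≤ 8 * δ * ((8 * δ) ^ k * volume (⋃ i ∈ J, (job i).lifespan)) := by gcongr
      _ = (8 * δ) ^ (k + 1) * volume (⋃ i ∈ J, (job i).lifespan) := by ring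

theorem FeasibleOn.volume_crowded_le {m : ℕ} {lam : ℝ} (hfeas : FeasibleOn J job m) (hm : 0 < m)
    (hlam : 0 < lam) (hlam2 : lam ≤ 1 / 2)
    (hlax : ∀ i ∈ J, (job i).laxity ≤ lam * (job i).len) (k : ℕ) :
    volume (crowded J job ((4 * k + 1) * (512 * m))) ≤
      ENNReal.ofReal lam ^ k * volume (⋃ i ∈ J, (job i).lifespan) := by
  obtain ⟨δ, hδ, hδlam, hbound⟩ := exists_denseLoadBound hlam hlam2 hfeas hlax
  have hpow : (8 * ENNReal.ofReal δ) ^ 4 ≤ ENNReal.ofReal lam := by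
    rw [← ENNReal.ofReal_ofNat, ← ENNReal.ofReal_mul (by norm_num),
      ← ENNReal.ofReal_pow (by positivity)]
    exact ENNReal.ofReal_le_ofReal hδlam
  refine (hbound.volume_crowded_succ_mul_le (by omega) (4 * k)).trans ?_
  rw [pow_mul]
  gcongr

theorem antitone_overloaded : Antitone (overloaded J job) :=
  fun _ _ hle _ ht => hle.trans ht

theorem overloaded_two_mul_subset :
    overloaded J job (2 * n) ⊆
      crowded J job n ∪ -crowded J (fun i => (job i).reverse) n := by
  classical
  intro t ht
  have hsub : {i ∈ J | t ∈ (job i).lifespan} ⊆ {i ∈ J | (job i).Reaches t t} ∪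
      {i ∈ J | (job i).reverse.Reaches (-t) (-t)} := by
    rw [← Finset.filter_or]
    exact Finset.monotone_filter_right J fun i _ => Job.reaches_self_or_reverse_of_mem_lifespan
  have hcard := (Finset.card_le_card hsub).trans (Finset.card_union_le _ _)
  have ht' : 2 * n ≤ #{i ∈ J | t ∈ (job i).lifespan} := ht
  rcases le_or_gt n #{i ∈ J | (job i).Reaches t t} with hfwd | hfwd
  · exact .inl ⟨t, hfwd⟩
  · refine .inr ⟨-t, ?_⟩
    change n ≤ #{i ∈ J | (job i).reverse.Reaches (-t) (-t)}
    omega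

theorem FeasibleOn.volume_overloaded_le {m : ℕ} {lam : ℝ} (hfeas : FeasibleOn J job m)
    (hm : 0 < m) (hlam : 0 < lam) (hlam2 : lam ≤ 1 / 2)
    (hlax : ∀ i ∈ J, (job i).laxity ≤ lam * (job i).len) (k : ℕ) :
    volume (overloaded J job (2 * ((4 * k + 1) * (512 * m)))) ≤
      2 * ENNReal.ofReal lam ^ k * volume (⋃ i ∈ J, (job i).lifespan) := by
  have hfwd := hfeas.volume_crowded_le hm hlam hlam2 hlax k
  have hbwd := hfeas.reverse.volume_crowded_le hm hlam hlam2
    (by simpa only [Job.laxity_reverse, Job.len_reverse] using hlax) k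
  have hneg : (⋃ i ∈ J, (job i).reverse.lifespan) = -⋃ i ∈ J, (job i).lifespan := by
    simp only [Job.lifespan_reverse, iUnion_neg]
  rw [hneg, Measure.measure_neg] at hbwd
  calc volume (overloaded J job (2 * ((4 * k + 1) * (512 * m))))
      ≤ volume (crowded J job ((4 * k + 1) * (512 * m)))
        + volume (-crowded J (fun i => (job i).reverse) ((4 * k + 1) * (512 * m))) :=
        (measure_mono overloaded_two_mul_subset).trans (measure_union_le _ _)
    _ ≤ _ := by
        rw [Measure.measure_neg, mul_assoc, two_mul]
        exact add_le_add hfwd hbwd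

end Crowded

theorem le_pow_ceil_logb {b x : ℝ} (hb : 1 < b) (hx : 0 < x) : x ≤ b ^ ⌈Real.logb b x⌉₊ :=
  calc x = b ^ Real.logb b x := (Real.rpow_logb (by linarith) hb.ne' hx).symm
    _ ≤ b ^ (⌈Real.logb b x⌉₊ : ℝ) := Real.rpow_le_rpow_of_exponent_le hb.le (Nat.le_ceil _)
    _ = b ^ ⌈Real.logb b x⌉₊ := Real.rpow_natCast ..

theorem exists_ten_mul_pow_le {lam₁ lam₂ : ℝ} (h₁ : 0 < lam₁) (h₁₂ : lam₁ ≤ lam₂)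
    (h₂ : lam₂ ≤ 1 / 2) :
    ∃ k : ℕ, 10 * lam₂ ^ k ≤ lam₁ ∧
      (4 * k + 1 : ℝ) ≤ 25 * (1 + Real.log (lam₂ / lam₁) / Real.log (1 / lam₂)) := by
  have hpos : 0 < lam₂ := h₁.trans_le h₁₂
  have hbase : 1 < 1 / lam₂ := (one_lt_div hpos).2 (by linarith)
  rw [Real.log_div_log]
  set R := Real.logb (1 / lam₂) (lam₂ / lam₁)
  have hR : 0 ≤ R := Real.logb_nonneg hbase ((one_le_div h₁).2 h₁₂)
  refine ⟨⌈R⌉₊ + 5, ?_, ?_⟩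
  · have hceil : lam₂ ^ ⌈R⌉₊ ≤ lam₁ / lam₂ := by
      have h : lam₂ / lam₁ ≤ (1 / lam₂) ^ ⌈R⌉₊ := le_pow_ceil_logb hbase (div_pos hpos h₁)
      rw [one_div_pow, ← one_div_div lam₁ lam₂] at h
      exact (one_div_le_one_div (div_pos h₁ hpos) (by positivity)).1 h
    have hfour : lam₂ ^ 4 ≤ (1 / 2) ^ 4 := pow_le_pow_left₀ hpos.le h₂ 4
    calc 10 * lam₂ ^ (⌈R⌉₊ + 5) = 10 * lam₂ ^ ⌈R⌉₊ * lam₂ * lam₂ ^ 4 := by ring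
      _ ≤ 10 * (lam₁ / lam₂) * lam₂ * (1 / 2) ^ 4 := by gcongr
      _ = 10 * (1 / 2) ^ 4 * lam₁ := by field_simp
      _ ≤ lam₁ := by linarith
  · have hlt := Nat.ceil_lt_add_one hR
    push_cast
    linarith

section Competitors

variable {ι : Type*} {J : Finset ι} {job : ι → Job} {j : ι}

open scoped Classical in
/-- The jobs of `J` that may take precedence over `j` under SJF during the lifespan of `j`: they are
no larger than `j`, and their lifespans meet that of `j`. -/
noncomputable def competitors (J : Finset ι) (job : ι → Job) (j : ι) : Finset ι :=
  {i ∈ J | (job i).p ≤ (job j).p ∧ ((job i).lifespan ∩ (job j).lifespan).Nonempty}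

theorem competitors_subset : competitors J job j ⊆ J := by
  classical exact Finset.filter_subset _ _

theorem volume_biUnion_lifespan_competitors_le (hlax : ∀ i ∈ J, 2 * (job i).laxity ≤ (job i).len) :
    volume (⋃ i ∈ competitors J job j, (job i).lifespan) ≤ ENNReal.ofReal (5 * (job j).len) := by
  classical
  have hcover : (⋃ i ∈ competitors J job j, (job i).lifespan) ⊆
      Icc ((job j).r - 2 * (job j).len) ((job j).d + 2 * (job j).len) := by
    refine iUnion₂_subset fun i hi x hx => ?_
    obtain ⟨hiJ, hsize, y, hyi, hyj⟩ := Finset.mem_filter.1 hi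
    have hlen : (job i).len ≤ 2 * (job j).len := by
      have := hlax i hiJ
      have := (job i).p_add_laxity
      have : (job j).p ≤ (job j).len := by rw [Job.len]; linarith [(job j).fits]
      linarith
    have hlen_i : (job i).len = (job i).d - (job i).r := rfl
    exact ⟨by linarith [hx.1, hyi.2, hyj.1], by linarith [hx.2, hyi.1, hyj.2]⟩
  refine (measure_mono hcover).trans_eq ?_
  rw [Real.volume_Icc, Job.len]
  ring_nf

end Competitors

namespace IsSJFSchedule

variable {ι : Type*} {J : Finset ι} {job : ι → Job} {m : ℕ} {P : ι → Set ℝ} {j : ι}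

theorem volume_le_size (h : IsSJFSchedule J job m P) (hj : j ∈ J) :
    volume (P j) ≤ ENNReal.ofReal (job j).p := by
  obtain ⟨⟨-, hsub, -⟩, halive, -⟩ := h
  refine measure_le_of_forall_inter_Iio_le ⟨(job j).d, fun t ht => (hsub j hj ht).2⟩ fun t ht => ?_
  have hprefix : P j ∩ Iio t ⊆ P j ∩ Ico (job j).r t := fun x hx =>
    ⟨hx.1, (hsub j hj hx.1).1, hx.2⟩
  exact (measure_mono hprefix).trans (halive j hj t ht).2.le

theorem volume_lifespan_sdiff_le (h : IsSJFSchedule J job m P) (hj : j ∈ J)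
    (hlate : volume (P j) < ENNReal.ofReal (job j).p) :
    volume ((job j).lifespan \ P j) ≤ volume (overloaded (competitors J job j) job m) := by
  classical
  obtain ⟨⟨-, hsub, -⟩, -, hsjf⟩ := h
  refine measure_mono_ae ?_
  filter_upwards [hsjf, compl_mem_ae_iff.2 (measure_singleton (job j).d)] with t ht htd htj
  have halive : Alive job P j t :=
    ⟨⟨htj.1.1, htj.1.2.lt_of_ne htd⟩, (measure_mono inter_subset_left).trans_lt hlate⟩
  obtain ⟨S, hSJ, hScard, hS⟩ := ht j hj halive htj.2
  refine hScard.ge.trans (Finset.card_le_card fun i hi => ?_)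
  obtain ⟨hti, -, hsize⟩ := hS i hi
  have hmem := hsub i (hSJ hi) hti
  exact Finset.mem_filter.2 ⟨Finset.mem_filter.2 ⟨hSJ hi, hsize, t, hmem, htj.1⟩, hmem⟩

end IsSJFSchedule

theorem sjf_machine_optimal_general {ι : Type*} {J : Finset ι} {job : ι → Job} {lam₁ lam₂ : ℝ}
    {mstar m : ℕ} (h₁ : 0 < lam₁) (h₂ : lam₂ ≤ 1 / 2)
    (hlax : ∀ i ∈ J, (job i).laxity ≤ lam₂ * (job i).len) (hfeas : FeasibleOn J job mstar)
    (hm : 25600 * mstar * (1 + Real.log (lam₂ / lam₁) / Real.log (1 / lam₂)) ≤ (m : ℝ))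
    {P : ι → Set ℝ} (hP : IsSJFSchedule J job m P) {j : ι} (hj : j ∈ J)
    (hlow : lam₁ * (job j).len ≤ (job j).laxity) :
    volume (P j) = ENNReal.ofReal (job j).p := by
  have h₁₂ : lam₁ ≤ lam₂ := le_of_mul_le_mul_right (hlow.trans (hlax j hj)) (job j).len_pos
  have hpos : 0 < lam₂ := h₁.trans_le h₁₂
  obtain ⟨k, hk, hkR⟩ := exists_ten_mul_pow_le h₁ h₁₂ h₂
  have hmk : 2 * ((4 * k + 1) * (512 * mstar)) ≤ m := by
    have hscale := mul_le_mul_of_nonneg_left hkR (by positivity : (0 : ℝ) ≤ 1024 * mstar)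
    exact_mod_cast (by linarith : (2 * ((4 * k + 1) * (512 * mstar)) : ℝ) ≤ m)
  have hshort : ∀ i ∈ J, 2 * (job i).laxity ≤ (job i).len := fun i hi => by
    nlinarith [hlax i hi, (job i).len_pos]
  refine (hP.volume_le_size hj).antisymm (not_lt.1 fun hlate => ?_)
  refine lt_irrefl (ENNReal.ofReal (job j).laxity) ?_
  calc ENNReal.ofReal (job j).laxity
      < volume ((job j).lifespan \ P j) := Job.ofReal_laxity_lt_volume_lifespan_sdiff hlate
    _ ≤ volume (overloaded (competitors J job j) job m) := hP.volume_lifespan_sdiff_le hj hlate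
    _ ≤ volume (overloaded (competitors J job j) job (2 * ((4 * k + 1) * (512 * mstar)))) :=
        measure_mono (antitone_overloaded hmk)
    _ ≤ 2 * ENNReal.ofReal lam₂ ^ k * volume (⋃ i ∈ competitors J job j, (job i).lifespan) :=
        (hfeas.mono competitors_subset).volume_overloaded_le (hfeas.machines_pos hj)
          hpos h₂ (fun i hi => hlax i (competitors_subset hi)) k
    _ ≤ 2 * ENNReal.ofReal lam₂ ^ k * ENNReal.ofReal (5 * (job j).len) := by
        gcongr
        exact volume_biUnion_lifespan_competitors_le hshort
    _ = ENNReal.ofReal (10 * lam₂ ^ k * (job j).len) := by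
        rw [← ENNReal.ofReal_pow hpos.le, ← ENNReal.ofReal_ofNat,
          ← ENNReal.ofReal_mul zero_le_two, ← ENNReal.ofReal_mul (by positivity)]
        ring_nf
    _ ≤ ENNReal.ofReal (job j).laxity :=
        ENNReal.ofReal_le_ofReal ((mul_le_mul_of_nonneg_right hk (job j).len_pos.le).trans hlow)

/-- SJF is `O(log_{1/λ₂}(λ₂/λ₁))`-machine optimal on jobs with relative laxities in
`[λ₁, λ₂] ⊆ (0, 1/2]`: there is an absolute constant `C > 0` such that if the instance is
feasible on `m*` machines and `m ≥ C·m*·(1 + log(λ₂/λ₁)/log(1/λ₂))`, then every SJF schedule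
on `m` machines completes every job. -/
theorem sjf_machine_optimal :
    ∃ C : ℝ, 0 < C ∧
      ∀ (ι : Type) (J : Finset ι) (job : ι → Job) (lam₁ lam₂ : ℝ) (mstar m : ℕ),
        0 < lam₁ → lam₁ ≤ lam₂ → lam₂ ≤ 1 / 2 →
        (∀ j ∈ J, lam₁ * (job j).len ≤ (job j).laxity ∧ (job j).laxity ≤ lam₂ * (job j).len) →
        FeasibleOn J job mstar →
        C * mstar * (1 + Real.log (lam₂ / lam₁) / Real.log (1 / lam₂)) ≤ (m : ℝ) →
        ∀ P : ι → Set ℝ, IsSJFSchedule J job m P →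
          ∀ j ∈ J, volume (P j) = ENNReal.ofReal (job j).p :=
  ⟨25600, by norm_num, fun _ _ _ _ _ _ _ h₁ _ h₂ hlax hfeas hm _ hP j hj =>
    sjf_machine_optimal_general h₁ h₂ (fun i hi => (hlax i hi).2) hfeas hm hP hj (hlax j hj).1⟩
end

section
/- Let ρ ∈ (0,1], let J be a finite set of jobs each with relative laxity at least ρ, and suppose J is feasible on m* machines. If m ≥ m*/ρ², then every EDF schedule of J on m machines completes every job by its deadline, i.e. |P_j| = p_j for all j ∈ J. In words: EDF is 1/ρ²-machine optimal when all jobs have relative laxity at least ρ. -/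
/-!
Let `d` be the earliest deadline that the EDF schedule `P` misses, and discard all jobs with a later
deadline; the remaining schedule is still EDF. Compare `P` with a feasible schedule `Q` through the
lag of `P` behind `Q`, the difference of the total work done before time `t`. With `K = m* / ρ`, the
claim is that the lag is at most `(1 - ρ) K (d - t)`, so that it vanishes at `t = d`. Since `Q` uses
at most `m* = ρ K` machines, the excess of the lag over this bound can grow only while `P` keeps
fewer than `K` machines busy.

If the excess is positive at some time, then at an earlier time `t` it is also positive and fewer
than `K` machines are busy; as `K ≤ m`, every job alive at `t` is then being processed. Were each of
these fewer than `K` jobs to need at most `(1 - ρ) (d - t)` more units of work, the bound would hold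
at `t`. Hence some job `j` needs more, and, having relative laxity at least `ρ`, it has waited for
more than a `ρ`-fraction of `[r_j, t]`. While it waits all `m ≥ K / ρ` machines are busy, so `P` has
averaged at least `K` busy machines since `r_j`, and the excess is already positive at `r_j`. There
are only finitely many release times, so this cannot be repeated indefinitely.
-/

open MeasureTheory Set

/-- `P` is an EDF (Earliest Deadline First) schedule of the jobs `J` on `m` machines: it is a
schedule, jobs are processed only while alive, and for almost every time `t`, if some job is
alive but not processed at `t`, then `m` alive jobs with deadlines at most its deadline are
processed at `t`. -/
def IsEDFSchedule {ι : Type*} (J : Finset ι) (job : ι → Job) (m : ℕ) (P : ι → Set ℝ) : Prop :=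
  IsSchedule J job m P ∧
  (∀ j ∈ J, ∀ t ∈ P j, Alive job P j t) ∧
  (∀ᵐ t : ℝ ∂volume, ∀ j ∈ J, Alive job P j t → t ∉ P j →
    ∃ S : Finset ι, S ⊆ J ∧ S.card = m ∧
      ∀ i ∈ S, t ∈ P i ∧ Alive job P i t ∧ (job i).d ≤ (job j).d)

lemma forall_mem_of_forall_image_lt {ι α : Type*} [Preorder α] {J : Finset ι} (f : ι → α)
    {q : ι → Prop} (h : ∀ i ∈ J, (∀ j ∈ J, f j < f i → q j) → q i) : ∀ i ∈ J, q i :=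
  fun _ hi => (J.wellFoundedOn (r := fun i j => f i < f j)).induction hi h

lemma exists_le_forall_Ioc_lt_of_continuousOn {α β : Type*} [ConditionallyCompleteLinearOrder α]
    [TopologicalSpace α] [OrderTopology α] [LinearOrder β] [TopologicalSpace β]
    [OrderClosedTopology β] {f : α → β} {a b : α} {y : β} (hf : ContinuousOn f (Icc a b))
    (hab : a ≤ b) (ha : f a ≤ y) : ∃ s ∈ Icc a b, f s ≤ y ∧ ∀ t ∈ Ioc s b, y < f t := by
  have hcompact : IsCompact (Icc a b ∩ f ⁻¹' Iic y) :=
    isCompact_Icc.of_isClosed_subset (hf.preimage_isClosed_of_isClosed isClosed_Icc isClosed_Iic)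
      inter_subset_left
  obtain ⟨s, ⟨hs, hfs⟩, hmax⟩ := hcompact.exists_isGreatest ⟨a, left_mem_Icc.2 hab, ha⟩
  refine ⟨s, hs, hfs, fun t ht => ?_⟩
  by_contra! hft
  exact (hmax ⟨⟨hs.1.trans ht.1.le, ht.2⟩, hft⟩).not_gt ht.1

/-! ### Double counting -/

open Classical in
/-- The number of sets `A j`, `j ∈ J`, that contain `x`. For a schedule this is the number of
machines busy at time `x`. -/
noncomputable def load {ι α : Type*} (J : Finset ι) (A : ι → Set α) (x : α) : ℕ :=
  (J.filter fun j => x ∈ A j).card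

section Load

variable {ι α : Type*} {J : Finset ι} {A : ι → Set α}

open Classical in
lemma card_le_load {S : Finset ι} {x : α} (hSJ : S ⊆ J) (hS : ∀ j ∈ S, x ∈ A j) :
    S.card ≤ load J A x :=
  Finset.card_le_card fun j hj => Finset.mem_filter.2 ⟨hSJ hj, hS j hj⟩

lemma load_eq_sum_indicator (x : α) :
    (load J A x : ℝ) = ∑ j ∈ J, (A j).indicator (1 : α → ℝ) x := by
  classical simp [load, Set.indicator_apply]

variable [MeasurableSpace α] {μ : Measure α} {E : Set α}

lemma integrableOn_load (hA : ∀ j ∈ J, MeasurableSet (A j)) (hE : μ E ≠ ⊤) :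
    IntegrableOn (fun x => (load J A x : ℝ)) E μ := by
  simp only [load_eq_sum_indicator]
  exact integrable_finsetSum J fun j hj => (integrableOn_const hE).indicator (hA j hj)

lemma setIntegral_load (hA : ∀ j ∈ J, MeasurableSet (A j)) (hE : μ E ≠ ⊤) :
    ∫ x in E, (load J A x : ℝ) ∂μ = ∑ j ∈ J, μ.real (A j ∩ E) := by
  simp only [load_eq_sum_indicator]
  have hint : ∀ j ∈ J, IntegrableOn ((A j).indicator (1 : α → ℝ)) E μ := fun j hj =>
    (integrableOn_const hE).indicator (hA j hj)
  rw [integral_finsetSum J hint]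
  refine Finset.sum_congr rfl fun j hj => ?_
  rw [integral_indicator_one (hA j hj), measureReal_restrict_apply (hA j hj)]

lemma mul_measureReal_le_sum_measureReal_inter {k : ℝ} (hA : ∀ j ∈ J, MeasurableSet (A j))
    (hEm : MeasurableSet E) (hE : μ E ≠ ⊤) (hk : ∀ᵐ x ∂μ, x ∈ E → k ≤ load J A x) :
    k * μ.real E ≤ ∑ j ∈ J, μ.real (A j ∩ E) := by
  rw [← setIntegral_load hA hE, mul_comm, ← smul_eq_mul, ← setIntegral_const]
  exact setIntegral_mono_on_ae (integrableOn_const hE) (integrableOn_load hA hE) hEm hk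

lemma sum_measureReal_inter_le_mul_measureReal {k : ℝ} (hA : ∀ j ∈ J, MeasurableSet (A j))
    (hEm : MeasurableSet E) (hE : μ E ≠ ⊤) (hk : ∀ᵐ x ∂μ, x ∈ E → load J A x ≤ k) :
    ∑ j ∈ J, μ.real (A j ∩ E) ≤ k * μ.real E := by
  rw [← setIntegral_load hA hE, mul_comm, ← smul_eq_mul, ← setIntegral_const]
  exact setIntegral_mono_on_ae (integrableOn_load hA hE) (integrableOn_const hE) hEm hk

end Load

/-! ### Work done before a given time -/

/-- The amount of time before `t` at which a job with set of processing times `A` is processed. -/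
noncomputable def workBefore (A : Set ℝ) (t : ℝ) : ℝ := volume.real (A ∩ Iio t)

section WorkBefore

variable {A : Set ℝ} {r d u t : ℝ}

lemma workBefore_nonneg : 0 ≤ workBefore A t := measureReal_nonneg

lemma workBefore_le_measureReal (hA : volume A ≠ ⊤) : workBefore A t ≤ volume.real A :=
  measureReal_mono inter_subset_left hA

lemma workBefore_eq_add (hA : volume A ≠ ⊤) (hut : u ≤ t) :
    workBefore A t = workBefore A u + volume.real (A ∩ Ico u t) := by
  rw [workBefore, ← measureReal_inter_add_sdiff (s := A ∩ Iio t) (t := Iio u) measurableSet_Iio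
    (measure_ne_top_of_subset inter_subset_left hA), inter_assoc, inter_sdiff_assoc, Iio_inter_Iio,
    min_eq_right hut, Iio_sdiff_Iio, workBefore]

lemma monotone_workBefore (hA : volume A ≠ ⊤) : Monotone (workBefore A) := fun u t hut => by
  rw [workBefore_eq_add hA hut]
  exact le_add_of_nonneg_right measureReal_nonneg

lemma lipschitzWith_workBefore (hA : volume A ≠ ⊤) : LipschitzWith 1 (workBefore A) := by
  refine LipschitzWith.of_le_add fun t u => ?_
  rcases le_total t u with htu | hut
  · exact (monotone_workBefore hA htu).trans (le_add_of_nonneg_right dist_nonneg)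
  · rw [workBefore_eq_add hA hut, Real.dist_eq, abs_of_nonneg (sub_nonneg.2 hut),
      ← Real.volume_real_Ico_of_le hut]
    gcongr
    · simp
    · exact inter_subset_right

lemma workBefore_eq_zero (hA : A ⊆ Ici r) (ht : t ≤ r) : workBefore A t = 0 := by
  have hdisj : Disjoint A (Iio t) :=
    disjoint_left.2 fun x hx hxt => (ht.trans (hA hx)).not_gt hxt
  simp [workBefore, hdisj.inter_eq]

lemma workBefore_eq_measureReal (hA : A ⊆ Iic d) (ht : d ≤ t) :
    workBefore A t = volume.real A :=
  calc workBefore A t = volume.real (A ∩ Iic t) :=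
        measureReal_congr (Filter.EventuallyEq.rfl.inter Iio_ae_eq_Iic)
    _ = volume.real A := by rw [inter_eq_left.2 (hA.trans (Iic_subset_Iic.2 ht))]

lemma measureReal_le_of_forall_workBefore_le {p : ℝ} (hA : A ⊆ Icc r d)
    (hp : ∀ t ∈ A, workBefore A t ≤ p) (hp₀ : 0 ≤ p) : volume.real A ≤ p := by
  by_contra! hlt
  obtain ⟨c, hpc, hcA⟩ := exists_between hlt
  have hfin : volume A ≠ ⊤ := measure_ne_top_of_subset hA (by simp)
  have hr : workBefore A r = 0 := workBefore_eq_zero (fun x hx => (hA hx).1) le_rfl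
  have hd : workBefore A d = volume.real A :=
    workBefore_eq_measureReal (fun x hx => (hA hx).2) le_rfl
  obtain ⟨t, ht⟩ : c ∈ range (workBefore A) :=
    mem_range_of_exists_le_of_exists_ge (lipschitzWith_workBefore hfin).continuous
      ⟨r, by linarith⟩ ⟨d, by linarith⟩
  have hAt : A ⊆ Iic t := fun x hx => by
    by_contra! htx
    linarith [monotone_workBefore hfin (not_le.1 htx).le, hp x hx]
  linarith [workBefore_eq_measureReal hAt le_rfl]

end WorkBefore

/-! ### Schedules -/

section Schedule

variable {ι : Type*} {J : Finset ι} {job : ι → Job} {m : ℕ} {P : ι → Set ℝ} {j : ι} {t : ℝ}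

namespace IsSchedule

lemma mono {R : Finset ι} (h : IsSchedule J job m P) (hR : R ⊆ J) : IsSchedule R job m P :=
  ⟨fun j hj => h.1 j (hR hj), fun j hj => h.2.1 j (hR hj),
    fun t S hS => h.2.2 t S (hS.trans hR)⟩

lemma volume_ne_top (h : IsSchedule J job m P) (hj : j ∈ J) : volume (P j) ≠ ⊤ :=
  measure_ne_top_of_subset (h.2.1 j hj) (by simp [Job.lifespan])

lemma volume_eq_ofReal_iff (h : IsSchedule J job m P) (hj : j ∈ J) :
    volume (P j) = ENNReal.ofReal (job j).p ↔ volume.real (P j) = (job j).p := by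
  rw [← ofReal_measureReal (h.volume_ne_top hj),
    ENNReal.ofReal_eq_ofReal_iff measureReal_nonneg (job j).p_pos.le]

open Classical in
lemma load_le (h : IsSchedule J job m P) : load J P t ≤ m :=
  h.2.2 t _ (Finset.filter_subset _ _) fun _ hj => (Finset.mem_filter.1 hj).2

lemma workBefore_of_le_release (h : IsSchedule J job m P) (hj : j ∈ J) (ht : t ≤ (job j).r) :
    workBefore (P j) t = 0 :=
  workBefore_eq_zero (fun _ hx => (h.2.1 j hj hx).1) ht

lemma workBefore_of_deadline_le (h : IsSchedule J job m P) (hj : j ∈ J) (ht : (job j).d ≤ t) :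
    workBefore (P j) t = volume.real (P j) :=
  workBefore_eq_measureReal (fun _ hx => (h.2.1 j hj hx).2) ht

lemma alive_iff (h : IsSchedule J job m P) (hj : j ∈ J) :
    Alive job P j t ↔ t ∈ Ico (job j).r (job j).d ∧ workBefore (P j) t < (job j).p := by
  have hinter : P j ∩ Ico (job j).r t = P j ∩ Iio t :=
    subset_antisymm (inter_subset_inter_right _ Ico_subset_Iio_self)
      fun x hx => ⟨hx.1, (h.2.1 j hj hx.1).1, hx.2⟩
  rw [Alive, hinter, ENNReal.lt_ofReal_iff_toReal_lt
    (measure_ne_top_of_subset inter_subset_left (h.volume_ne_top hj)), workBefore, Measure.real]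

lemma alive_of_le {u : ℝ} (h : IsSchedule J job m P) (hj : j ∈ J) (ht : Alive job P j t)
    (hu : (job j).r ≤ u) (hut : u ≤ t) : Alive job P j u := by
  rw [h.alive_iff hj] at ht ⊢
  exact ⟨⟨hu, hut.trans_lt ht.1.2⟩,
    (monotone_workBefore (h.volume_ne_top hj) hut).trans_lt ht.2⟩

end IsSchedule

namespace IsEDFSchedule

lemma measureReal_le (h : IsEDFSchedule J job m P) (hj : j ∈ J) :
    volume.real (P j) ≤ (job j).p :=
  measureReal_le_of_forall_workBefore_le (h.1.2.1 j hj)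
    (fun t ht => ((h.1.alive_iff hj).1 (h.2.1 j hj t ht)).2.le) (job j).p_pos.le

open Classical in
lemma filter_deadline_le (h : IsEDFSchedule J job m P) (d : ℝ) :
    IsEDFSchedule (J.filter fun j => (job j).d ≤ d) job m P := by
  refine ⟨h.1.mono (Finset.filter_subset _ _),
    fun j hj => h.2.1 j (Finset.mem_of_mem_filter j hj), ?_⟩
  filter_upwards [h.2.2] with t ht j hj hlive hnot
  obtain ⟨hjJ, hjd⟩ := Finset.mem_filter.1 hj
  obtain ⟨S, hSJ, hcard, hS⟩ := ht j hjJ hlive hnot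
  exact ⟨S, fun i hi => Finset.mem_filter.2 ⟨hSJ hi, (hS i hi).2.2.trans hjd⟩, hcard, hS⟩

lemma ae_le_load (h : IsEDFSchedule J job m P) :
    ∀ᵐ t, ∀ j ∈ J, Alive job P j t → t ∉ P j → m ≤ load J P t := by
  filter_upwards [h.2.2] with t ht j hj hlive hnot
  obtain ⟨S, hSJ, hcard, hS⟩ := ht j hj hlive hnot
  exact hcard ▸ card_le_load hSJ fun i hi => (hS i hi).1

lemma mul_waiting_le_sum_of_alive (h : IsEDFSchedule J job m P) (hj : j ∈ J)
    (hlive : Alive job P j t) :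
    m * (t - (job j).r - workBefore (P j) t) ≤
      ∑ i ∈ J, volume.real (P i ∩ Ico (job j).r t) := by
  obtain ⟨⟨hrt, -⟩, -⟩ := (h.1.alive_iff hj).1 hlive
  have hwait : volume.real (Ico (job j).r t \ P j) = t - (job j).r - workBefore (P j) t := by
    rw [workBefore_eq_add (h.1.volume_ne_top hj) hrt, h.1.workBefore_of_le_release hj le_rfl,
      ← Real.volume_real_Ico_of_le hrt,
      ← measureReal_inter_add_sdiff (s := Ico (job j).r t) (h.1.1 j hj) (by simp), inter_comm]
    ring
  calc m * (t - (job j).r - workBefore (P j) t)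
      = m * volume.real (Ico (job j).r t \ P j) := by rw [hwait]
    _ ≤ ∑ i ∈ J, volume.real (P i ∩ (Ico (job j).r t \ P j)) := by
        refine mul_measureReal_le_sum_measureReal_inter h.1.1
          (measurableSet_Ico.diff (h.1.1 j hj)) (measure_ne_top_of_subset sdiff_subset (by simp)) ?_
        filter_upwards [h.ae_le_load] with u hu ⟨hut, hnot⟩
        exact mod_cast hu j hj (h.1.alive_of_le hj hlive hut.1 hut.2.le) hnot
    _ ≤ ∑ i ∈ J, volume.real (P i ∩ Ico (job j).r t) := by
        gcongr with i hi
        · exact measure_ne_top_of_subset inter_subset_left (h.1.volume_ne_top hi)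
        · exact sdiff_subset

end IsEDFSchedule

end Schedule

/-! ### The lag behind a feasible schedule -/

/-- The amount by which, before time `t`, the schedule `P` has done less work on `J` than `Q`. -/
noncomputable def lag {ι : Type*} (J : Finset ι) (P Q : ι → Set ℝ) (t : ℝ) : ℝ :=
  ∑ j ∈ J, (workBefore (Q j) t - workBefore (P j) t)

/-- The excess of the lag of `P` behind `Q` over the bound `c * (d - t)`, which vanishes at the
deadline `d`. -/
noncomputable def excessLag {ι : Type*} (J : Finset ι) (P Q : ι → Set ℝ) (c d t : ℝ) : ℝ :=
  lag J P Q t - c * (d - t)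

section Lag

variable {ι : Type*} {J : Finset ι} {job : ι → Job} {m M : ℕ} {P Q : ι → Set ℝ} {c d t u : ℝ}

lemma continuous_excessLag (hP : IsSchedule J job m P) (hQ : IsSchedule J job M Q) :
    Continuous (excessLag J P Q c d) := by
  refine Continuous.sub (continuous_finsetSum J fun j hj => ?_) (by fun_prop)
  exact (lipschitzWith_workBefore (hQ.volume_ne_top hj)).continuous.sub
    (lipschitzWith_workBefore (hP.volume_ne_top hj)).continuous

lemma excessLag_le_add (hP : IsSchedule J job m P) (hQ : IsSchedule J job M Q) (hut : u ≤ t) :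
    excessLag J P Q c d t ≤
      excessLag J P Q c d u + (M + c) * (t - u) - ∑ j ∈ J, volume.real (P j ∩ Ico u t) := by
  have hlag : lag J P Q t = lag J P Q u + ∑ j ∈ J, volume.real (Q j ∩ Ico u t) -
      ∑ j ∈ J, volume.real (P j ∩ Ico u t) := by
    simp only [lag, ← Finset.sum_add_distrib, ← Finset.sum_sub_distrib]
    refine Finset.sum_congr rfl fun j hj => ?_
    rw [workBefore_eq_add (hQ.volume_ne_top hj) hut, workBefore_eq_add (hP.volume_ne_top hj) hut]
    ring
  have hQwork : ∑ j ∈ J, volume.real (Q j ∩ Ico u t) ≤ M * (t - u) := by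
    rw [← Real.volume_real_Ico_of_le hut]
    exact sum_measureReal_inter_le_mul_measureReal hQ.1 measurableSet_Ico (by simp)
      (.of_forall fun s _ => mod_cast hQ.load_le)
  simp only [excessLag, hlag]
  linarith

lemma exists_le_excessLag_nonpos (hQ : IsSchedule J job M Q) (hc : 0 ≤ c) (htd : t ≤ d) :
    ∃ b ≤ t, excessLag J P Q c d b ≤ 0 := by
  obtain ⟨b, hb⟩ := (J.finite_toSet.image fun j => (job j).r).bddBelow
  refine ⟨min b t, min_le_right b t, ?_⟩
  have hlag : lag J P Q (min b t) ≤ 0 := Finset.sum_nonpos fun j hj => by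
    have hbr : min b t ≤ (job j).r := (min_le_left b t).trans (hb (mem_image_of_mem _ hj))
    rw [hQ.workBefore_of_le_release hj hbr]
    linarith [workBefore_nonneg (A := P j) (t := min b t)]
  have hbound : 0 ≤ c * (d - min b t) :=
    mul_nonneg hc (sub_nonneg.2 ((min_le_right b t).trans htd))
  rw [excessLag]
  linarith

lemma exists_load_lt_of_excessLag_pos {p : ℝ → Prop} (hP : IsSchedule J job m P)
    (hQ : IsSchedule J job M Q) (hc : 0 ≤ c) (htd : t ≤ d) (ht : 0 < excessLag J P Q c d t)
    (hp : ∀ᵐ u, p u) :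
    ∃ u < t, 0 < excessLag J P Q c d u ∧ load J P u < M + c ∧ p u := by
  obtain ⟨b, hbt, hb⟩ := exists_le_excessLag_nonpos (P := P) hQ hc htd
  obtain ⟨s, ⟨-, hst⟩, hs, hpos⟩ := exists_le_forall_Ioc_lt_of_continuousOn
    (continuous_excessLag hP hQ).continuousOn hbt hb
  by_contra! hload
  have hPwork : (M + c) * (t - s) ≤ ∑ j ∈ J, volume.real (P j ∩ Ico s t) := by
    rw [← Real.volume_real_Ico_of_le hst]
    refine mul_measureReal_le_sum_measureReal_inter hP.1 measurableSet_Ico (by simp) ?_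
    filter_upwards [hp, Measure.ae_ne volume s] with u hpu hus hu
    by_contra! hlt
    exact hload u hu.2 (hpos u ⟨hu.1.lt_of_ne' hus, hu.2.le⟩) hlt hpu
  linarith [excessLag_le_add (c := c) (d := d) hP hQ hst]

lemma workBefore_le_of_not_alive {j : ι} (hP : IsSchedule J job m P) (hQ : IsSchedule J job M Q)
    (hj : j ∈ J) (hQp : volume.real (Q j) ≤ (job j).p)
    (hdone : (job j).d ≤ t → (job j).p ≤ volume.real (P j)) (hdead : ¬ Alive job P j t) :
    workBefore (Q j) t ≤ workBefore (P j) t := by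
  have hQt : workBefore (Q j) t ≤ (job j).p :=
    (workBefore_le_measureReal (hQ.volume_ne_top hj)).trans hQp
  rcases lt_or_ge t (job j).r with htr | hrt
  · exact (hQ.workBefore_of_le_release hj htr.le).trans_le workBefore_nonneg
  rcases lt_or_ge t (job j).d with htd | hdt
  · refine hQt.trans (not_lt.1 fun hlt => ?_)
    exact hdead ((hP.alive_iff hj).2 ⟨⟨hrt, htd⟩, hlt⟩)
  · exact hQt.trans ((hdone hdt).trans_eq (hP.workBefore_of_deadline_le hj hdt).symm)

lemma lag_le_load_mul {q : ℝ} (hP : IsSchedule J job m P) (hQ : IsSchedule J job M Q)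
    (hQp : ∀ j ∈ J, volume.real (Q j) ≤ (job j).p)
    (hdone : ∀ j ∈ J, (job j).d ≤ t → (job j).p ≤ volume.real (P j))
    (hbusy : ∀ j ∈ J, Alive job P j t → t ∈ P j) (hq : 0 ≤ q)
    (hrem : ∀ j ∈ J, Alive job P j t → (job j).p - workBefore (P j) t ≤ q) :
    lag J P Q t ≤ load J P t * q := by
  rw [load_eq_sum_indicator, Finset.sum_mul]
  refine Finset.sum_le_sum fun j hj => ?_
  by_cases hlive : Alive job P j t
  · rw [indicator_of_mem (hbusy j hj hlive), Pi.one_apply, one_mul]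
    linarith [hrem j hj hlive, hQp j hj,
      workBefore_le_measureReal (t := t) (hQ.volume_ne_top hj)]
  · have hnonneg : 0 ≤ (P j).indicator (1 : ℝ → ℝ) t * q :=
      mul_nonneg (indicator_nonneg (fun _ _ => zero_le_one) t) hq
    linarith [workBefore_le_of_not_alive hP hQ hj (hQp j hj) (hdone j hj) hlive]

end Lag

/-! ### Earliest deadline first -/

namespace IsEDFSchedule

variable {ι : Type*} {J : Finset ι} {job : ι → Job} {m M : ℕ} {P Q : ι → Set ℝ} {ρ K d t : ℝ}

lemma excessLag_le_excessLag_release {j : ι} (hP : IsEDFSchedule J job m P)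
    (hQ : IsSchedule J job M Q) (hMK : M ≤ ρ * K) (hKm : K ≤ ρ * m) (hj : j ∈ J)
    (hlive : Alive job P j t) (hlax : (job j).p ≤ (1 - ρ) * (d - (job j).r))
    (hrem : (1 - ρ) * (d - t) ≤ (job j).p - workBefore (P j) t) :
    excessLag J P Q ((1 - ρ) * K) d t ≤ excessLag J P Q ((1 - ρ) * K) d (job j).r := by
  obtain ⟨⟨hrt, -⟩, -⟩ := (hP.1.alive_iff hj).1 hlive
  have hwait : ρ * (t - (job j).r) ≤ t - (job j).r - workBefore (P j) t := by
    linarith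
  have hPwork : K * (t - (job j).r) ≤ ∑ i ∈ J, volume.real (P i ∩ Ico (job j).r t) :=
    calc K * (t - (job j).r) ≤ ρ * m * (t - (job j).r) := by gcongr
      _ = m * (ρ * (t - (job j).r)) := by ring
      _ ≤ m * (t - (job j).r - workBefore (P j) t) := by gcongr
      _ ≤ _ := hP.mul_waiting_le_sum_of_alive hj hlive
  have hgrowth := excessLag_le_add (c := (1 - ρ) * K) (d := d) hP.1 hQ hrt
  have hrate := mul_le_mul_of_nonneg_right hMK (sub_nonneg.2 hrt)
  linarith

lemma exists_release_lt_excessLag_pos (hP : IsEDFSchedule J job m P) (hQ : IsSchedule J job M Q)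
    (hQp : ∀ j ∈ J, volume.real (Q j) ≤ (job j).p)
    (hdone : ∀ j ∈ J, (job j).d < d → (job j).p ≤ volume.real (P j))
    (hlax : ∀ j ∈ J, (job j).p ≤ (1 - ρ) * (d - (job j).r)) (hρ : ρ ≤ 1)
    (hK : 0 ≤ K) (hMK : M ≤ ρ * K) (hKm : K ≤ ρ * m) (htd : t ≤ d)
    (ht : 0 < excessLag J P Q ((1 - ρ) * K) d t) :
    ∃ j ∈ J, (job j).r < t ∧ 0 < excessLag J P Q ((1 - ρ) * K) d (job j).r := by
  obtain ⟨u, hut, hu, hload, hconserving⟩ := exists_load_lt_of_excessLag_pos hP.1 hQ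
    (mul_nonneg (sub_nonneg.2 hρ) hK) htd ht hP.ae_le_load
  have hloadK : (load J P u : ℝ) ≤ K := by linarith
  have hq : 0 ≤ (1 - ρ) * (d - u) := mul_nonneg (by linarith) (by linarith)
  have hbusy : ∀ j ∈ J, Alive job P j u → u ∈ P j := by
    intro j hj hlive
    by_contra hnot
    have hm : (m : ℝ) ≤ load J P u := mod_cast hconserving j hj hlive hnot
    linarith [mul_le_of_le_one_left m.cast_nonneg hρ]
  obtain ⟨j, hj, hlive, hrem⟩ : ∃ j ∈ J, Alive job P j u ∧
      (1 - ρ) * (d - u) < (job j).p - workBefore (P j) u := by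
    by_contra! hrem
    have hlag : lag J P Q u ≤ K * ((1 - ρ) * (d - u)) :=
      (lag_le_load_mul hP.1 hQ hQp (fun j hj hju => hdone j hj (by linarith)) hbusy hq hrem).trans
        (mul_le_mul_of_nonneg_right hloadK hq)
    rw [excessLag] at hu
    linarith
  have hru : (job j).r ≤ u := ((hP.1.alive_iff hj).1 hlive).1.1
  exact ⟨j, hj, hru.trans_lt hut, hu.trans_le <|
    hP.excessLag_le_excessLag_release hQ hMK hKm hj hlive (hlax j hj) hrem.le⟩

lemma lag_le (hP : IsEDFSchedule J job m P) (hQ : IsSchedule J job M Q)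
    (hQp : ∀ j ∈ J, volume.real (Q j) ≤ (job j).p)
    (hdone : ∀ j ∈ J, (job j).d < d → (job j).p ≤ volume.real (P j))
    (hlax : ∀ j ∈ J, (job j).p ≤ (1 - ρ) * (d - (job j).r)) (hρ : ρ ≤ 1)
    (hK : 0 ≤ K) (hMK : M ≤ ρ * K) (hKm : K ≤ ρ * m) (htd : t ≤ d) :
    lag J P Q t ≤ (1 - ρ) * K * (d - t) := by
  have hrelease : ∀ j ∈ J, (job j).r ≤ d → excessLag J P Q ((1 - ρ) * K) d (job j).r ≤ 0 := by
    refine forall_mem_of_forall_image_lt (fun j => (job j).r) fun j _ ih hjd => ?_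
    by_contra! hpos
    obtain ⟨i, hi, hij, hipos⟩ := hP.exists_release_lt_excessLag_pos hQ hQp hdone hlax hρ hK hMK
      hKm hjd hpos
    exact (ih i hi hij (hij.le.trans hjd)).not_gt hipos
  by_contra! hpos
  obtain ⟨j, hj, hjt, hjpos⟩ := hP.exists_release_lt_excessLag_pos hQ hQp hdone hlax hρ hK hMK
    hKm htd (sub_pos.2 hpos)
  exact (hrelease j hj (hjt.le.trans htd)).not_gt hjpos

lemma measureReal_eq_of_forall_deadline_le (hP : IsEDFSchedule J job m P)
    (hQ : IsSchedule J job M Q) (hQp : ∀ j ∈ J, volume.real (Q j) = (job j).p)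
    (hd : ∀ j ∈ J, (job j).d ≤ d)
    (hdone : ∀ j ∈ J, (job j).d < d → volume.real (P j) = (job j).p)
    (hlax : ∀ j ∈ J, ρ * (job j).len ≤ (job j).laxity) (hρ : ρ ≤ 1)
    (hK : 0 ≤ K) (hMK : M ≤ ρ * K) (hKm : K ≤ ρ * m) :
    ∀ j ∈ J, volume.real (P j) = (job j).p := by
  have hlax_d : ∀ j ∈ J, (job j).p ≤ (1 - ρ) * (d - (job j).r) := fun j hj => by
    have hlen := mul_le_mul_of_nonneg_left (hd j hj) (sub_nonneg.2 hρ)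
    have hlax_j := hlax j hj
    rw [Job.len, Job.laxity] at hlax_j
    linarith
  have hlag : lag J P Q d ≤ 0 := by
    simpa using hP.lag_le hQ (fun j hj => (hQp j hj).le) (fun j hj hjd => (hdone j hj hjd).ge)
      hlax_d hρ hK hMK hKm le_rfl
  have hlag_eq : lag J P Q d = ∑ j ∈ J, ((job j).p - volume.real (P j)) :=
    Finset.sum_congr rfl fun j hj => by
      rw [hQ.workBefore_of_deadline_le hj (hd j hj), hP.1.workBefore_of_deadline_le hj (hd j hj),
        hQp j hj]
  have hnonneg : ∀ j ∈ J, 0 ≤ (job j).p - volume.real (P j) := fun j hj =>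
    sub_nonneg.2 (hP.measureReal_le hj)
  have hzero := (Finset.sum_eq_zero_iff_of_nonneg hnonneg).1
    ((hlag_eq ▸ hlag).antisymm (Finset.sum_nonneg hnonneg))
  exact fun j hj => (sub_eq_zero.1 (hzero j hj)).symm

end IsEDFSchedule

/-- EDF is `1/ρ²`-machine optimal when all jobs have relative laxity at least `ρ`: if the
instance is feasible on `m*` machines and `m ≥ m*/ρ²`, then every EDF schedule on `m`
machines completes every job. -/
theorem edf_machine_optimal {ι : Type*} (ρ : ℝ) (hρ : ρ ∈ Set.Ioc (0 : ℝ) 1)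
    (J : Finset ι) (job : ι → Job)
    (hlax : ∀ j ∈ J, ρ * (job j).len ≤ (job j).laxity)
    (mstar m : ℕ) (hfeas : FeasibleOn J job mstar)
    (hm : (mstar : ℝ) / ρ ^ 2 ≤ (m : ℝ)) :
    ∀ P : ι → Set ℝ, IsEDFSchedule J job m P →
      ∀ j ∈ J, volume (P j) = ENNReal.ofReal (job j).p := by
  classical
  intro P hP
  obtain ⟨Q, hQ, hQp⟩ := hfeas
  have hMK : (mstar : ℝ) ≤ ρ * (mstar / ρ) := (mul_div_cancel₀ _ hρ.1.ne').ge
  have hKm : (mstar : ℝ) / ρ ≤ ρ * m :=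
    calc (mstar : ℝ) / ρ = ρ * (mstar / ρ ^ 2) := by field_simp
      _ ≤ ρ * m := mul_le_mul_of_nonneg_left hm hρ.1.le
  suffices h : ∀ j ∈ J, volume.real (P j) = (job j).p from
    fun j hj => (hP.1.volume_eq_ofReal_iff hj).2 (h j hj)
  refine forall_mem_of_forall_image_lt (fun j => (job j).d) fun k hk ih => ?_
  have hsub : J.filter (fun i => (job i).d ≤ (job k).d) ⊆ J := Finset.filter_subset _ _
  exact (hP.filter_deadline_le (job k).d).measureReal_eq_of_forall_deadline_le (hQ.mono hsub)
    (fun i hi => (hQ.volume_eq_ofReal_iff (hsub hi)).1 (hQp i (hsub hi)))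
    (fun i hi => (Finset.mem_filter.1 hi).2) (fun i hi => ih i (hsub hi))
    (fun i hi => hlax i (hsub hi)) hρ.2 (div_nonneg mstar.cast_nonneg hρ.1.le) hMK hKm
    k (Finset.mem_filter.2 ⟨hk, le_rfl⟩)
end
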